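/- Fix k ≥ 2 and suppose m ≡_k A_0 b. Then: (1) if b > ⟨m⟩₋₁, then m − 1 has simplified k-normal form m − 1 ≃_k A_0(b−1) · (k−1) + (k^{b−1} − 1); (2) if b = ⟨m⟩₋₁ > 0, then m − 1 ≃_k b · p + q for some p < k^{b−1} and some q < b. -/

import Mathlib

/-- The base-`k` Ackermann function `A_a(k, b)`:
`A_0(k, b) = k ^ b` and `A_{a+1}(k, b) = A_a^k(k, A_{a+1}(k, b-1))`,
with the auxiliary value `A_{a+1}(k, -1) = 1`
(equivalently, `A_{a+1}(k, b) = (A_a^k)^[b+1] (1)`). -/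
def Ack (k : ℕ) : ℕ → ℕ → ℕ
  | 0, b => k ^ b
  | a + 1, b => ((Ack k a)^[k])^[b + 1] 1

/-- `IsSandwich k m n a b ms` says that `(A_{a i}(k, b i))_{i=1}^n` is a
`k`-sandwiching sequence for `m`, with sandwiching values `(ms i)_{i=0}^n`:
`ms 0 = 0`; for each `i < n`, `A_{a (i+1)} (ms i) ≤ m < A_{a (i+1) + 1} (ms i)`,
`A_{a (i+1)} (b (i+1)) ≤ m < A_{a (i+1)} (b (i+1) + 1)`, and
`ms (i+1) = A_{a (i+1)} (b (i+1))`; and `A_0 (ms n) > m`. -/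
structure IsSandwich (k m n : ℕ) (a b ms : ℕ → ℕ) : Prop where
  ms_zero : ms 0 = 0
  idx_lo : ∀ i < n, Ack k (a (i + 1)) (ms i) ≤ m
  idx_hi : ∀ i < n, m < Ack k (a (i + 1) + 1) (ms i)
  arg_lo : ∀ i < n, Ack k (a (i + 1)) (b (i + 1)) ≤ m
  arg_hi : ∀ i < n, m < Ack k (a (i + 1)) (b (i + 1) + 1)
  ms_succ : ∀ i < n, ms (i + 1) = Ack k (a (i + 1)) (b (i + 1))
  halt : m < Ack k 0 (ms n)

/-- `NF k m a b c` says that `m ≡_k A_a b + c`, i.e. `m` has `k`-normal form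
`A_a b + c` (so `m = A_a b + c` and the `k`-sandwiching sequence of `m` ends
with the pair `(a, b)`). -/
def NF (k m a b c : ℕ) : Prop :=
  m = Ack k a b + c ∧
    ∃ n as bs ms, 1 ≤ n ∧ IsSandwich k m n as bs ms ∧ a = as n ∧ b = bs n

/-- `SNF k m d p q` says that `m ≃_k d · p + q`, i.e. `m` has simplified
`k`-normal form `d · p + q`: `m ≡_k A_a b + c` for some `a`, `b`, `c` with
`d = A_a b`, `m = d * p + q` and `q < d`. -/
def SNF (k m d p q : ℕ) : Prop :=
  ∃ a b c, NF k m a b c ∧ d = Ack k a b ∧ m = d * p + q ∧ q < d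

theorem aux_iter (f : ℕ → ℕ) (hf : ∀ x, x < f x) (j x : ℕ) : x + j ≤ f^[j] x := by
  induction j with
  | zero => simp
  | succ j ih =>
    rw [Function.iterate_succ_apply']
    have := hf (f^[j] x)
    omega

theorem aux_lt (k : ℕ) (hk : 2 ≤ k) (a : ℕ) : ∀ x, x < Ack k a x := by
  induction a with
  | zero => intro x; simp only [Ack]; exact Nat.lt_pow_self (by omega)
  | succ a ih =>
    intro x
    simp only [Ack]
    have h := aux_iter ((Ack k a)^[k])
      (fun y => lt_of_lt_of_le (by omega) (aux_iter _ ih k y)) (x + 1) 1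
    omega

theorem aux_mono (k : ℕ) (hk : 2 ≤ k) (a : ℕ) : StrictMono (Ack k a) := by
  apply strictMono_nat_of_lt_succ
  intro x
  cases a with
  | zero => simp only [Ack]; exact Nat.pow_lt_pow_right (by omega) (by omega)
  | succ a =>
    simp only [Ack]
    rw [Function.iterate_succ_apply' _ (x + 1)]
    exact lt_of_lt_of_le (by omega) (aux_iter _ (aux_lt k hk a) k _)

theorem aux_ge (k : ℕ) (hk : 2 ≤ k) (a b : ℕ) : k ≤ Ack k (a + 1) b := by
  have h0 : k ≤ Ack k (a + 1) 0 := by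
    simp only [Ack]
    have := aux_iter _ (aux_lt k hk a) k 1
    simp only [zero_add, Function.iterate_one]
    omega
  exact h0.trans ((aux_mono k hk (a + 1)).monotone (Nat.zero_le b))

theorem stmt_10 (k n m b : ℕ) (aseq bseq ms : ℕ → ℕ) (hk : 2 ≤ k) (hn : 1 ≤ n)
    (hs : IsSandwich k m n aseq bseq ms) (hm : m = Ack k 0 b)
    (han : aseq n = 0) (hbn : bseq n = b) :
    (ms (n - 1) < b → SNF k (m - 1) (Ack k 0 (b - 1)) (k - 1) (k ^ (b - 1) - 1)) ∧
      (b = ms (n - 1) → 0 < b →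
        ∃ p q, p < k ^ (b - 1) ∧ q < b ∧ SNF k (m - 1) b p q) := by
  obtain ⟨N, rfl⟩ : ∃ N, n = N + 1 := ⟨n - 1, by omega⟩
  simp only [Nat.add_sub_cancel]
  have hlt : ∀ i < N + 1, ms i < m := fun i hi =>
    lt_of_lt_of_le (aux_lt k hk _ _) (hs.idx_lo i hi)
  have harg : ∀ i < N, Ack k (aseq (i + 1)) (bseq (i + 1)) ≤ m - 1 := by
    intro i hi
    rw [← hs.ms_succ i (by omega)]
    have := hlt (i + 1) (by omega)
    omega
  have hidx : ∀ i < N, Ack k (aseq (i + 1)) (ms i) ≤ m - 1 := by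
    intro i hi
    refine le_trans ((aux_mono k hk _).monotone ?_) (harg i hi)
    have := (aux_mono k hk _).lt_iff_lt.1
      (lt_of_le_of_lt (hs.idx_lo i (by omega)) (hs.arg_hi i (by omega)))
    omega
  have hmk : m = k ^ b := by rw [hm]; simp only [Ack]
  have hmpos : 0 < m := by rw [hmk]; positivity
  constructor
  · intro hb
    obtain ⟨B, rfl⟩ : ∃ B, b = B + 1 := ⟨b - 1, by omega⟩
    simp only [Nat.add_sub_cancel]
    have hBm : k ^ B < m := by rw [hmk]; exact Nat.pow_lt_pow_right (by omega) (by omega)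
    have hBpos : 0 < k ^ B := by positivity
    refine ⟨0, B, m - 1 - k ^ B, ⟨?_, N + 1, aseq, fun i => if i = N + 1 then B else bseq i,
      fun i => if i = N + 1 then k ^ B else ms i, hn, ?_, han.symm, by simp⟩, rfl, ?_, ?_⟩
    · simp only [Ack]; omega
    · constructor
      · simp [hs.ms_zero]
      · intro i hi
        have : i ≠ N + 1 := by omega
        simp only [this, if_false]
        rcases Nat.lt_succ_iff_lt_or_eq.1 hi with h | rfl
        · exact hidx i h
        · rw [han]
          have : Ack k 0 (ms i) < Ack k 0 (B + 1) := aux_mono k hk 0 hb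
          omega
      · intro i hi
        have : i ≠ N + 1 := by omega
        simp only [this, if_false]
        have := hs.idx_hi i hi
        omega
      · intro i hi
        rcases Nat.lt_succ_iff_lt_or_eq.1 hi with h | rfl
        · have : i + 1 ≠ N + 1 := by omega
          simp only [this, if_false]
          exact harg i h
        · simp only [if_true, han, Ack]; omega
      · intro i hi
        rcases Nat.lt_succ_iff_lt_or_eq.1 hi with h | rfl
        · have : i + 1 ≠ N + 1 := by omega
          simp only [this, if_false]
          have := hs.arg_hi i hi
          omega
        · simp only [if_true, han, Ack]; omega
      · intro i hi
        rcases Nat.lt_succ_iff_lt_or_eq.1 hi with h | rfl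
        · have : i + 1 ≠ N + 1 := by omega
          simp only [this, if_false]
          exact hs.ms_succ i hi
        · simp only [if_true, han, Ack]
      · simp only [if_true, Ack]
        have h1 : B < k ^ B := Nat.lt_pow_self (by omega)
        have h2 : k ^ (B + 1) ≤ k ^ (k ^ B) := Nat.pow_le_pow_right (by omega) h1
        omega
    · simp only [Ack]
      obtain ⟨K, rfl⟩ : ∃ K, k = K + 1 := ⟨k - 1, by omega⟩
      rw [pow_succ, mul_add] at hmk
      simp only [Nat.add_sub_cancel]
      omega
    · simp only [Ack]; omega
  · intro hb hb0
    obtain ⟨L, rfl⟩ : ∃ L, N = L + 1 := by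
      cases N with
      | zero => have := hs.ms_zero; omega
      | succ L => exact ⟨L, rfl⟩
    have hbv : b = Ack k (aseq (L + 1)) (bseq (L + 1)) := by
      rw [hb]; exact hs.ms_succ L (by omega)
    have hkm : k ≤ m := by rw [hmk]; exact Nat.le_self_pow (by omega) k
    have hkb : k ≤ b := by
      have hhi := hs.arg_hi L (by omega)
      cases h : aseq (L + 1) with
      | succ a => rw [hbv, h]; exact aux_ge k hk _ _
      | zero =>
        rw [h] at hbv hhi
        simp only [Ack] at hbv hhi
        rw [hbv]
        apply Nat.le_self_pow
        intro h0
        rw [h0] at hhi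
        simp at hhi
        omega
    have hbm : b < m := by rw [hb]; exact hlt _ (by omega)
    refine ⟨(m - 1) / b, (m - 1) % b, ?_, Nat.mod_lt _ hb0,
      aseq (L + 1), bseq (L + 1), m - 1 - b, ⟨by omega, L + 1, aseq, bseq, ms, by omega, ?_,
        rfl, rfl⟩, hbv, (Nat.div_add_mod _ _).symm, Nat.mod_lt _ hb0⟩
    · rw [Nat.div_lt_iff_lt_mul hb0]
      have h1 : k ^ (b - 1) * k = m := by
        rw [hmk, ← pow_succ]; congr 1; omega
      have h2 := Nat.mul_le_mul_left (k ^ (b - 1)) hkb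
      omega
    · exact ⟨hs.ms_zero, hidx, fun i hi => by have := hs.idx_hi i (by omega); omega, harg,
        fun i hi => by have := hs.arg_hi i (by omega); omega,
        fun i hi => hs.ms_succ i (by omega), by rw [← hb]; omega⟩
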